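/- Let A be a self-adjoint operator and λ ∈ ℝ with λ ∉ Spec A. Then there exist δ > 0 and b > 0 such that for every z ∈ ℂ with |z − λ| ≤ δ and every unit vector v ∈ Dom(A²), Re⟨(A−z)² v, v⟩ ≥ b. Consequently, for every finite-dimensional subspace L ⊆ Dom(A²) with orthogonal projection P, the numerical range of P(A−z)²|L is contained in the half-plane {Re w ≥ b}. -/

import Mathlib

/-!
If `A` is symmetric and `z = x + i y`, then `Re ⟪v, (A - z)² v⟫ = ‖(A - x) v‖² - y² ‖v‖²`.
If moreover `c ‖v‖ ≤ ‖(A - l) v‖` on the domain (`c` comes from the norm of the resolvent at `l`),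
then for `‖z - l‖ ≤ d ≤ c` the right-hand side is at least
`((c - d)² - d²) ‖v‖² = c (c - 2 d) ‖v‖²`, which is positive for `d < c / 2`.
Compressing by an orthogonal projection `P` does not change `⟪v, ·⟫` for `v` in the range of `P`.
-/

open Filter Topology

noncomputable section

variable {H : Type*} [NormedAddCommGroup H] [InnerProductSpace ℂ H] [CompleteSpace H]

/-- `(A - z)²` as a linear map. -/
def sqz (A : H →ₗ[ℂ] H) (z : ℂ) : H →ₗ[ℂ] H :=
  (A - z • LinearMap.id) ∘ₗ (A - z • LinearMap.id)

/-- Spectrum of the (possibly unbounded) operator given by restricting `A` to `D`. -/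
def pspec (D : Submodule ℂ H) (A : H →ₗ[ℂ] H) : Set ℂ :=
  {z | ¬ ∃ R : H →L[ℂ] H, (∀ x ∈ D, R (A x - z • x) = x) ∧
      ∀ y : H, R y ∈ D ∧ A (R y) - z • R y = y}

section RegularType

section NormedField

variable {𝕜 E : Type*} [NormedField 𝕜] [SeminormedAddCommGroup E] [NormedSpace 𝕜 E]

theorem sub_norm_mul_norm_le_norm_sub_smul {c : ℝ} {z w : 𝕜} {x v : E}
    (h : c * ‖v‖ ≤ ‖x - w • v‖) : (c - ‖z - w‖) * ‖v‖ ≤ ‖x - z • v‖ := by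
  have hsplit : x - w • v = (x - z • v) + (z - w) • v := by module
  have htri : ‖x - w • v‖ ≤ ‖x - z • v‖ + ‖z - w‖ * ‖v‖ := by
    rw [hsplit, ← norm_smul]
    exact norm_add_le _ _
  linarith

/-- The point `z` is of regular type for the restriction of `A` to `D`: `A - z` is bounded below
on `D`. This is the part of being in the resolvent set that does not involve surjectivity. -/
def IsOfRegularType (D : Submodule 𝕜 E) (A : E →ₗ[𝕜] E) (z : 𝕜) : Prop :=
  ∃ c > 0, ∀ v ∈ D, c * ‖v‖ ≤ ‖A v - z • v‖

end NormedField

theorem isOfRegularType_of_leftInverse {𝕜 E : Type*} [NontriviallyNormedField 𝕜]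
    [SeminormedAddCommGroup E] [NormedSpace 𝕜 E] {D : Submodule 𝕜 E} {A : E →ₗ[𝕜] E} {z : 𝕜}
    (R : E →L[𝕜] E) (hR : ∀ v ∈ D, R (A v - z • v) = v) : IsOfRegularType D A z := by
  refine ⟨(‖R‖ + 1)⁻¹, by positivity, fun v hv => ?_⟩
  rw [inv_mul_le_iff₀ (by positivity)]
  calc ‖v‖ = ‖R (A v - z • v)‖ := by rw [hR v hv]
    _ ≤ ‖R‖ * ‖A v - z • v‖ := R.le_opNorm _
    _ ≤ (‖R‖ + 1) * ‖A v - z • v‖ := by gcongr; linarith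

theorem isOfRegularType_of_notMem_pspec {F : Type*} [NormedAddCommGroup F] [InnerProductSpace ℂ F]
    {D : Submodule ℂ F} {A : F →ₗ[ℂ] F} {z : ℂ} (hz : z ∉ pspec D A) : IsOfRegularType D A z :=
  let ⟨R, hR, _⟩ := not_not.mp hz
  isOfRegularType_of_leftInverse R hR

end RegularType

section SymmetricOperator

open RCLike
open scoped ComplexConjugate

variable {𝕜 E : Type*} [RCLike 𝕜] [SeminormedAddCommGroup E] [InnerProductSpace 𝕜 E]

theorem re_inner_add_sub (x y : E) : re (inner 𝕜 (x + y) (x - y)) = ‖x‖ ^ 2 - ‖y‖ ^ 2 := by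
  rw [inner_add_left, inner_sub_right, inner_sub_right]
  simp only [map_add, map_sub, inner_self_eq_norm_sq, inner_re_symm (𝕜 := 𝕜) x y]
  ring

/-- The restriction of `A` to the domain `D` is a symmetric operator. As in `pspec`, the values of
`A` outside `D` are irrelevant. -/
def IsSymmetricOn (D : Submodule 𝕜 E) (A : E →ₗ[𝕜] E) : Prop :=
  ∀ u ∈ D, ∀ v ∈ D, inner 𝕜 (A u) v = inner 𝕜 u (A v)

namespace IsSymmetricOn

variable {D : Submodule 𝕜 E} {A : E →ₗ[𝕜] E}

theorem inner_sub_smul_right (hA : IsSymmetricOn D A) {u v : E} (hu : u ∈ D) (hv : v ∈ D) (z : 𝕜) :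
    inner 𝕜 u (A v - z • v) = inner 𝕜 (A u - conj z • u) v := by
  rw [inner_sub_right, inner_sub_left, inner_smul_right, inner_smul_left, conj_conj, hA u hu v hv]

theorem re_inner_sub_smul_sq (hA : IsSymmetricOn D A) (z : 𝕜) {v : E} (hv : v ∈ D)
    (hAv : A v ∈ D) :
    re (inner 𝕜 v (((A - z • 1) * (A - z • 1)) v)) =
      ‖A v - (re z : 𝕜) • v‖ ^ 2 - im z ^ 2 * ‖v‖ ^ 2 := by
  have hdom : A v - z • v ∈ D := D.sub_mem hAv (D.smul_mem z hv)
  set y : 𝕜 := im z * I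
  have hz : z = re z + y := (re_add_im z).symm
  have hconj : conj z = re z - y := conj_eq_re_sub_im z
  have hy : ‖y‖ ^ 2 = im z ^ 2 := by
    rw [norm_sq_eq_def]
    simp only [y, re_ofReal_mul, im_ofReal_mul, I_re, I_im, mul_zero, zero_add, sq]
  calc re (inner 𝕜 v (((A - z • 1) * (A - z • 1)) v))
      = re (inner 𝕜 (A v - conj z • v) (A v - z • v)) :=
        congrArg re (hA.inner_sub_smul_right hv hdom z)
    _ = re (inner 𝕜 ((A v - (re z : 𝕜) • v) + y • v) ((A v - (re z : 𝕜) • v) - y • v)) := by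
        congr 2
        · rw [hconj]; module
        · nth_rw 1 [hz]; module
    _ = ‖A v - (re z : 𝕜) • v‖ ^ 2 - im z ^ 2 * ‖v‖ ^ 2 := by
        rw [re_inner_add_sub, norm_smul, mul_pow, hy]

theorem le_re_inner_sub_smul_sq (hA : IsSymmetricOn D A) {c d l : ℝ} (hdc : d ≤ c)
    {z : 𝕜} (hz : ‖z - l‖ ≤ d) {v : E} (hv : v ∈ D) (hAv : A v ∈ D)
    (hbelow : c * ‖v‖ ≤ ‖A v - (l : 𝕜) • v‖) :
    c * (c - 2 * d) * ‖v‖ ^ 2 ≤ re (inner 𝕜 v (((A - z • 1) * (A - z • 1)) v)) := by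
  have hre : ‖(re z : 𝕜) - l‖ ≤ d := by
    have := (abs_re_le_norm (z - l)).trans hz
    rwa [map_sub, ofReal_re, ← norm_ofReal (K := 𝕜), ofReal_sub] at this
  have him : |im z| ≤ d := by
    simpa only [map_sub, ofReal_im, sub_zero] using (abs_im_le_norm (z - l)).trans hz
  have hlower : (c - d) * ‖v‖ ≤ ‖A v - (re z : 𝕜) • v‖ :=
    (by gcongr : (c - d) * ‖v‖ ≤ (c - ‖(re z : 𝕜) - l‖) * ‖v‖).trans
      (sub_norm_mul_norm_le_norm_sub_smul hbelow)
  calc c * (c - 2 * d) * ‖v‖ ^ 2 = ((c - d) * ‖v‖) ^ 2 - d ^ 2 * ‖v‖ ^ 2 := by ring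
    _ ≤ ‖A v - (re z : 𝕜) • v‖ ^ 2 - im z ^ 2 * ‖v‖ ^ 2 := by
        have := sub_nonneg.mpr hdc
        have := sq_le_sq' (abs_le.mp him).1 (abs_le.mp him).2
        gcongr
    _ = re (inner 𝕜 v (((A - z • 1) * (A - z • 1)) v)) := (hA.re_inner_sub_smul_sq z hv hAv).symm

end IsSymmetricOn

theorem inner_apply_of_mem_range {P : E →ₗ[𝕜] E} (hP : P.IsSymmetricProjection) {v : E}
    (hv : v ∈ LinearMap.range P) (x : E) : inner 𝕜 v (P x) = inner 𝕜 v x := by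
  rw [← hP.isSymmetric, (LinearMap.IsIdempotentElem.mem_range_iff hP.isIdempotentElem).mp hv]

theorem numerical_range_re_bounded_below_near_resolvent_point_general
    {D : Submodule 𝕜 E} {A : E →ₗ[𝕜] E} (hA : IsSymmetricOn D A) {l : ℝ}
    (hl : IsOfRegularType D A (l : 𝕜)) :
    ∃ δ > 0, ∃ b > 0, ∀ z : 𝕜, ‖z - l‖ ≤ δ →
      (∀ v ∈ D, A v ∈ D → ‖v‖ = 1 → b ≤ re (inner 𝕜 v (((A - z • 1) * (A - z • 1)) v))) ∧
      ∀ P : E →ₗ[𝕜] E, P.IsSymmetricProjection → (∀ v ∈ LinearMap.range P, v ∈ D ∧ A v ∈ D) →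
        ∀ v ∈ LinearMap.range P, ‖v‖ = 1 →
          b ≤ re (inner 𝕜 v (P (((A - z • 1) * (A - z • 1)) v))) := by
  obtain ⟨c, hc, hbelow⟩ := hl
  refine ⟨c / 4, by positivity, c * (c - 2 * (c / 4)), mul_pos hc (by linarith), fun z hz => ?_⟩
  have hnum : ∀ v ∈ D, A v ∈ D → ‖v‖ = 1 →
      c * (c - 2 * (c / 4)) ≤ re (inner 𝕜 v (((A - z • 1) * (A - z • 1)) v)) := by
    intro v hv hAv hnorm
    simpa only [hnorm, one_pow, mul_one] using
      hA.le_re_inner_sub_smul_sq (by linarith) hz hv hAv (hbelow v hv)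
  refine ⟨hnum, fun P hP hran v hv hnorm => ?_⟩
  rw [inner_apply_of_mem_range hP hv]
  exact hnum v (hran v hv).1 (hran v hv).2 hnorm

end SymmetricOperator

/-- If `A` is self-adjoint and `λ ∈ ℝ \ Spec A`, then there are `δ > 0` and `b > 0` such
that for every `z` with `|z - λ| ≤ δ` and every unit vector `v ∈ Dom A²`,
`Re ⟪(A - z)² v, v⟫ ≥ b`; consequently, the numerical range of any compression
`P (A - z)²|_(ran P)` with `ran P ⊆ Dom A²` lies in the half-plane `{Re w ≥ b}`. -/
theorem numerical_range_re_bounded_below_near_resolvent_point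
    (D : Submodule ℂ H) (A : H →ₗ[ℂ] H)
    -- `A` restricted to `D` is a (densely defined) self-adjoint operator:
    (hdense : Dense (D : Set H))
    (hsym : ∀ u ∈ D, ∀ v ∈ D, (inner ℂ (A u) v : ℂ) = inner ℂ u (A v))
    (hsa : ∀ x y : H, (∀ u ∈ D, (inner ℂ (A u) x : ℂ) = inner ℂ u y) → x ∈ D ∧ A x = y)
    (l : ℝ) (hl : (l : ℂ) ∉ pspec D A) :
    ∃ δ > 0, ∃ b > 0, ∀ z : ℂ, ‖z - (l : ℂ)‖ ≤ δ →
      (∀ v : H, v ∈ D → A v ∈ D → ‖v‖ = 1 →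
        b ≤ (inner ℂ v (sqz A z v) : ℂ).re) ∧
      ∀ P : H →L[ℂ] H, IsSelfAdjoint P → IsIdempotentElem P →
        (∀ v ∈ LinearMap.range (P : H →ₗ[ℂ] H), v ∈ D ∧ A v ∈ D) →
        ∀ v ∈ LinearMap.range (P : H →ₗ[ℂ] H), ‖v‖ = 1 →
          b ≤ (inner ℂ v (P (sqz A z v)) : ℂ).re := by
  obtain ⟨δ, hδ, b, hb, hmain⟩ := numerical_range_re_bounded_below_near_resolvent_point_general
    hsym (isOfRegularType_of_notMem_pspec hl)
  exact ⟨δ, hδ, b, hb, fun z hz => ⟨(hmain z hz).1, fun P hP hidem => (hmain z hz).2 P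
    (ContinuousLinearMap.IsStarProjection.isSymmetricProjection ⟨hidem, hP⟩)⟩⟩

end
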